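/- arXiv:2301.00063 — 2 statements merged into one kernel-verified Lean document; each statement's English description precedes it below -/
import Mathlib

section
/- Let f, g : [0,∞) → ℝ be càdlàg functions such that Δf(t) ≥ 0 for every t > 0, g is strictly increasing, and f(0) + g(0) ≥ 0. If h is a solution of the time-change equation TCE(f,g), then the function c given by c(t) = Leb({s ∈ [0,t] : h(s) > 0}) is strictly increasing on [0,∞). -/
/-!
Write `c = posTime h`; it is monotone, `1`-Lipschitz and `c 0 = 0`. Suppose `c` takes the same value
`k` at two points `a < b`. On `[a, b]` we have `h = f k + g`, which is strictly increasing, so if `h`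
were nonnegative at `a` it would be positive on `(a, b]` and `c` would grow there. Hence `h a < 0`.
Let `m ≤ a` be the first time at which `c = k`; since `g` increases, `h m = f k + g m < 0`.

* If `m = 0`, then `k = 0` and `h 0 = f 0 + g 0 ≥ 0`, a contradiction.
* If `m > 0`, then `c s ↑ k` with `c s < k` as `s ↑ m`, so `f (c s)` tends to the left limit of `f`
  at `k`, which is at most `f k < - g m` because the jump of `f` is nonnegative. As `g s < g m`,
  this gives `h s < 0` for `s` slightly to the left of `m`, so `c` is constant just before `m`,
  contradicting the minimality of `m`.
-/

open MeasureTheory Set Function Filter Topology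

/-- `f : ℝ → ℝ` is càdlàg on `[0,∞)`: right-continuous at every `t ≥ 0`
and with left limits at every `t > 0`. -/
def CadlagOn (f : ℝ → ℝ) : Prop :=
  (∀ t : ℝ, 0 ≤ t → ContinuousWithinAt f (Ici t) t) ∧
  (∀ t : ℝ, 0 < t → ∃ L : ℝ, Filter.Tendsto f (nhdsWithin t (Iio t)) (nhds L))

/-- `f` has non-negative jumps on `(0,∞)`: `Δf(t) = f t − f(t−) ≥ 0`. -/
def NonnegJumps (f : ℝ → ℝ) : Prop :=
  ∀ t : ℝ, 0 < t → Function.leftLim f t ≤ f t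

/-- `Leb({s ∈ [0,t] : h(s) > 0})`. -/
noncomputable def posTime (h : ℝ → ℝ) (t : ℝ) : ℝ :=
  (volume {s ∈ Icc (0:ℝ) t | 0 < h s}).toReal

/-- `Leb({s ∈ [0,t] : h(s) = 0})`. -/
noncomputable def zeroTime (h : ℝ → ℝ) (t : ℝ) : ℝ :=
  (volume {s ∈ Icc (0:ℝ) t | h s = 0}).toReal

/-- `h` is a solution of the time-change equation `TCE(f,g)`:
`h` is measurable on `[0,∞)` and `h(t) = f(c(t)) + g(t)` for all `t ≥ 0`,
where `c(t) = Leb({s ∈ [0,t] : h(s) > 0})`. -/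
def TCESol (f g h : ℝ → ℝ) : Prop :=
  Measurable ((Ici (0:ℝ)).restrict h) ∧
  ∀ t : ℝ, 0 ≤ t → h t = f (posTime h t) + g t

lemma posTime_set_ne_top (h : ℝ → ℝ) (t : ℝ) :
    volume {s ∈ Icc (0:ℝ) t | 0 < h s} ≠ ⊤ :=
  measure_ne_top_of_subset (sep_subset _ _) (by simp [Real.volume_Icc])

lemma posTime_mono (h : ℝ → ℝ) : Monotone (posTime h) := fun _ _ hst =>
  measureReal_mono (fun _ hx => ⟨⟨hx.1.1, hx.1.2.trans hst⟩, hx.2⟩) (posTime_set_ne_top h _)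

lemma posTime_zero (h : ℝ → ℝ) : posTime h 0 = 0 := by
  have : volume {s ∈ Icc (0:ℝ) 0 | 0 < h s} = 0 :=
    measure_mono_null (sep_subset _ _) (by simp)
  rw [posTime, this, ENNReal.toReal_zero]

lemma posTime_le_add (h : ℝ → ℝ) {s t : ℝ} (hst : s ≤ t) :
    posTime h t ≤ posTime h s + (t - s) := by
  have h1 : {x ∈ Icc (0:ℝ) t | 0 < h x} ⊆ {x ∈ Icc (0:ℝ) s | 0 < h x} ∪ Ioc s t := by
    intro x hx
    rcases le_or_gt x s with hxs | hxs
    · exact Or.inl ⟨⟨hx.1.1, hxs⟩, hx.2⟩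
    · exact Or.inr ⟨hxs, hx.1.2⟩
  have h2 := (measureReal_mono (μ := volume) h1
    (measure_union_ne_top (posTime_set_ne_top h s) (by simp))).trans (measureReal_union_le _ _)
  rwa [Real.volume_real_Ioc_of_le hst] at h2

lemma continuous_posTime (h : ℝ → ℝ) : Continuous (posTime h) := by
  refine (LipschitzWith.of_le_add_mul 1 fun x y => ?_).continuous
  rcases le_total x y with hxy | hxy
  · have := posTime_mono h hxy
    have := dist_nonneg (x := x) (y := y)
    push_cast
    linarith
  · have := posTime_le_add h hxy
    rw [Real.dist_eq, abs_of_nonneg (sub_nonneg.2 hxy)]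
    push_cast
    linarith

lemma posTime_le_of_nonpos {h : ℝ → ℝ} {s t : ℝ} (hneg : ∀ x ∈ Ioo s t, h x ≤ 0) :
    posTime h t ≤ posTime h s := by
  have h1 : {x ∈ Icc (0:ℝ) t | 0 < h x} ⊆ {x ∈ Icc (0:ℝ) s | 0 < h x} ∪ {t} := by
    intro x hx
    rcases le_or_gt x s with hxs | hxs
    · exact Or.inl ⟨⟨hx.1.1, hxs⟩, hx.2⟩
    · rcases hx.1.2.lt_or_eq with hxt | hxt
      · exact absurd hx.2 (hneg x ⟨hxs, hxt⟩).not_gt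
      · exact Or.inr hxt
  have h2 := (measureReal_mono (μ := volume) h1
    (measure_union_ne_top (posTime_set_ne_top h s) (by simp))).trans (measureReal_union_le _ _)
  rw [measureReal_def volume {t}, Real.volume_singleton] at h2
  simpa [posTime, measureReal_def] using h2

lemma posTime_lt_of_pos {h : ℝ → ℝ} {s t : ℝ} (hs : 0 ≤ s) (hst : s < t)
    (hpos : ∀ x ∈ Ioc s t, 0 < h x) : posTime h s < posTime h t := by
  have h1 : {x ∈ Icc (0:ℝ) s | 0 < h x} ∪ Ioc s t ⊆ {x ∈ Icc (0:ℝ) t | 0 < h x} := by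
    rintro x (hx | hx)
    · exact ⟨⟨hx.1.1, hx.1.2.trans hst.le⟩, hx.2⟩
    · exact ⟨⟨hs.trans hx.1.le, hx.2⟩, hpos x hx⟩
  have hd : Disjoint {x ∈ Icc (0:ℝ) s | 0 < h x} (Ioc s t) :=
    Set.disjoint_left.2 fun x hx hx' => hx'.1.not_ge hx.1.2
  have h2 := measureReal_mono (μ := volume) h1 (posTime_set_ne_top h _)
  rw [measureReal_union hd measurableSet_Ioc (posTime_set_ne_top h s) (by simp),
    Real.volume_real_Ioc_of_le hst.le] at h2
  change posTime h s + (t - s) ≤ posTime h t at h2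
  linarith

/-- If `g` is strictly increasing, then for any solution `h` of `TCE(f,g)`
the time change `c(t) = Leb({s ∈ [0,t] : h(s) > 0})` is strictly increasing on `[0,∞)`. -/
theorem tce_time_change_strictMono
    (f g h : ℝ → ℝ)
    (hf : CadlagOn f) (hg : CadlagOn g)
    (hjump : NonnegJumps f)
    (hgmono : StrictMonoOn g (Ici 0))
    (h0 : 0 ≤ f 0 + g 0)
    (hsol : TCESol f g h) :
    StrictMonoOn (posTime h) (Ici 0) := by
  obtain ⟨-, hsol⟩ := hsol
  intro a ha b hb hab
  by_contra hcon
  have ha0 : (0:ℝ) ≤ a := ha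
  have hkab : ∀ x ∈ Icc a b, posTime h x = posTime h a := fun x hx =>
    le_antisymm ((posTime_mono h hx.2).trans (not_lt.1 hcon)) (posTime_mono h hx.1)
  have hha : h a < 0 := by
    by_contra! hna
    refine hcon (posTime_lt_of_pos ha0 hab fun x hx => ?_)
    have hx0 : 0 ≤ x := ha0.trans hx.1.le
    have hgx := hgmono ha hx0 hx.1
    rw [hsol a ha0] at hna
    rw [hsol x hx0, hkab x ⟨hx.1.le, hx.2⟩]
    linarith
  -- `m` is the first time at which `posTime h` reaches the value `posTime h a`.
  obtain ⟨m, ⟨⟨hm0, hma⟩, hmk⟩, hmin⟩ :=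
    (isCompact_Icc.inter_right
      ((isClosed_singleton (x := posTime h a)).preimage (continuous_posTime h))).exists_isLeast
      (s := Icc 0 a ∩ posTime h ⁻¹' {posTime h a}) ⟨a, ⟨ha0, le_rfl⟩, rfl⟩
  have hmk : posTime h m = posTime h a := hmk
  have hneg : f (posTime h m) + g m < 0 := by
    have := hgmono.monotoneOn hm0 ha hma
    rw [hsol a ha0] at hha
    rw [hmk]
    linarith
  rcases hm0.eq_or_lt with rfl | hm
  · rw [posTime_zero] at hneg
    linarith
  have hlt : ∀ s, 0 ≤ s → s < m → posTime h s < posTime h m := fun s hs hsm =>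
    (posTime_mono h hsm.le).lt_of_ne fun he =>
      hsm.not_ge (hmin ⟨⟨hs, hsm.le.trans hma⟩, he.trans hmk⟩)
  have hk : 0 < posTime h m := by
    simpa [posTime_zero] using hlt 0 le_rfl hm
  obtain ⟨L, hL⟩ := hf.2 _ hk
  have hLlt : L < -g m := by
    have := hjump _ hk
    rw [leftLim_eq_of_tendsto hL] at this
    linarith
  have hc : Tendsto (posTime h) (𝓝[<] m) (𝓝[<] (posTime h m)) := by
    refine tendsto_nhdsWithin_iff.2 ⟨(continuous_posTime h).continuousWithinAt, ?_⟩
    filter_upwards [Ioo_mem_nhdsLT hm] with s hs using hlt s hs.1.le hs.2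
  have hev : ∀ᶠ s in 𝓝[<] m, h s ≤ 0 := by
    filter_upwards [(hL.comp hc).eventually_lt_const hLlt, Ioo_mem_nhdsLT hm] with s hs hsm
    have hgs := hgmono hsm.1.le hm0 hsm.2
    rw [hsol s hsm.1.le]
    simp only [Function.comp_apply] at hs
    linarith
  obtain ⟨l, hl, hls⟩ := (mem_nhdsLT_iff_exists_Ioo_subset' hm).1 hev
  -- `l` may be negative, so the contradiction is drawn at `max l 0`.
  have hle : posTime h m ≤ posTime h (max l 0) :=
    posTime_le_of_nonpos fun x hx => hls ⟨(le_max_left _ _).trans_lt hx.1, hx.2⟩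
  exact (hlt (max l 0) (le_max_right _ _) (max_lt hl hm)).not_ge hle
end

section
/- Let f : [0,∞) → ℝ be càdlàg with Δf(t) ≥ 0 for every t > 0 and f(0) ≥ 0, and let γ > 0. Set l(t) = sup_{0 ≤ s ≤ t} ((−f(s)) ∨ 0) and r = f + l, and assume Leb({t ≥ 0 : r(t) = 0}) = 0. Then the sticky equation Sγ(f) has exactly one solution h, and it is given by h = r ∘ c, where c is the inverse of the strictly increasing continuous function a(t) = t + l(t)/γ. -/
/-!
Write `a(t) = t + l(t)/γ`, so that `c` is the inverse of `a`, and `L(s) = l(c(s))/γ`.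

**Existence.** The nondecreasing functions `c` and `L` satisfy `c(s) + L(s) = s`, so both are
`1`-Lipschitz and do not increase the Lebesgue measure of sets. At the times when `r ∘ c = 0`, `c`
takes values in the null set `{r = 0}`. At the times when `r ∘ c > 0`, `L` takes values in a
countable set: by right-continuity of `f`, `l` is constant on a short interval to the right of
every point where `r > 0` (`countable_runSup_image`). Hence `c(t)` is at most the time spent by `r ∘ c`
in `(0,∞)` up to `t`, and `L(t)` at most the time spent at `0` (`le_occTime_of_null_image`). Since
`c(t) + L(t) = t` is the sum of the two times, both bounds are equalities, which is the sticky
equation.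

**Uniqueness.** Let `h` solve the equation. Both of its clocks stand still while `h < 0`, and `h`
cannot jump below `0` because `f` has no negative jumps, so `h ≥ 0` (`StickySol.nonneg`) and the
two clocks add up to `t`. As `zeroTime h` only grows while `h = 0`, Skorohod's argument gives
`γ * zeroTime h t = l (posTime h t)` (`StickySol.mul_zeroTime`). So `a (posTime h t) = t`, that is
`posTime h t = c t`, and the equation reads `h t = r (c t)`.
-/

open MeasureTheory Set Function Filter Topology

/-- `h` is a solution of the sticky equation `Sγ(f)`:
`h` is measurable on `[0,∞)` and, for all `t ≥ 0`,
`h(t) = f(Leb({s ∈ [0,t] : h(s) > 0})) + γ·Leb({s ∈ [0,t] : h(s) = 0})`. -/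
def StickySol (f : ℝ → ℝ) (γ : ℝ) (h : ℝ → ℝ) : Prop :=
  Measurable ((Ici (0:ℝ)).restrict h) ∧
  ∀ t : ℝ, 0 ≤ t → h t = f (posTime h t) + γ * zeroTime h t

/-! ### Càdlàg functions -/

/-- A right-continuous function is the pointwise limit of its values at the grid
points `(⌊(n+1)x⌋+1)/(n+1)`, which lie to the right of `x` at distance at most `1/(n+1)`. -/
lemma measurable_of_continuousWithinAt_Ici {g : ℝ → ℝ}
    (hg : ∀ x, ContinuousWithinAt g (Ici x) x) : Measurable g := by
  have key : ∀ x : ℝ, Tendsto (fun n : ℕ => ((⌊((n:ℝ)+1) * x⌋ : ℝ) + 1) / ((n:ℝ)+1)) atTop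
      (𝓝[≥] x) := by
    intro x
    have lo : ∀ n : ℕ, x ≤ ((⌊((n:ℝ)+1) * x⌋ : ℝ) + 1) / ((n:ℝ)+1) := by
      intro n
      have hn : (0:ℝ) < (n:ℝ) + 1 := by positivity
      rw [le_div_iff₀ hn]
      have := Int.lt_floor_add_one (((n:ℝ)+1) * x)
      linarith
    have hi : ∀ n : ℕ, ((⌊((n:ℝ)+1) * x⌋ : ℝ) + 1) / ((n:ℝ)+1) ≤ x + 1 / ((n:ℝ)+1) := by
      intro n
      have hn : (0:ℝ) < (n:ℝ) + 1 := by positivity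
      rw [add_div]
      gcongr
      rw [div_le_iff₀ hn]
      have := Int.floor_le (((n:ℝ)+1) * x)
      linarith
    refine tendsto_nhdsWithin_iff.2 ⟨?_, Eventually.of_forall lo⟩
    refine tendsto_of_tendsto_of_tendsto_of_le_of_le tendsto_const_nhds ?_ lo hi
    simpa using (tendsto_const_nhds (x := x)).add (tendsto_one_div_add_atTop_nhds_zero_nat (𝕜 := ℝ))
  refine measurable_of_tendsto_metrizable
    (f := fun (n : ℕ) (x : ℝ) => g (((⌊((n:ℝ)+1) * x⌋ : ℝ) + 1) / ((n:ℝ)+1))) ?_ ?_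
  · intro n
    have h1 : Measurable (fun z : ℤ => g (((z : ℝ) + 1) / ((n:ℝ)+1))) := measurable_from_top
    exact h1.comp (Int.measurable_floor.comp (measurable_const.mul measurable_id))
  · exact tendsto_pi_nhds.2 fun x => (hg x).tendsto.comp (key x)

lemma CadlagOn.bddAbove {f : ℝ → ℝ} (hf : CadlagOn f) (t : ℝ) :
    BddAbove ((fun s => max (-f s) 0) '' Icc (0:ℝ) t) := by
  refine isCompact_Icc.induction_on (p := fun S => BddAbove ((fun s => max (-f s) 0) '' S))
    (by simp) (fun s u hsu h => h.mono (image_mono hsu))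
    (fun s u hs hu => by rw [image_union]; exact hs.union hu) ?_
  intro x hx
  have right : ∀ᶠ y in 𝓝[≥] x, f x - 1 < f y :=
    (hf.1 x hx.1).tendsto.eventually (lt_mem_nhds (by linarith))
  obtain ⟨M, hM⟩ : ∃ M, ∀ᶠ y in 𝓝[Icc 0 t] x, M < f y := by
    rcases hx.1.eq_or_lt with h0 | h0
    · refine ⟨f x - 1, right.filter_mono (nhdsWithin_mono _ ?_)⟩
      rw [← h0]; exact Icc_subset_Ici_self
    · obtain ⟨L, hL⟩ := hf.2 x h0
      have left : ∀ᶠ y in 𝓝[<] x, L - 1 < f y := hL.eventually (lt_mem_nhds (by linarith))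
      refine ⟨min (L - 1) (f x - 1), Eventually.filter_mono nhdsWithin_le_nhds ?_⟩
      rw [← nhdsLT_sup_nhdsGE x, eventually_sup]
      exact ⟨left.mono fun y hy => (min_le_left _ _).trans_lt hy,
        right.mono fun y hy => (min_le_right _ _).trans_lt hy⟩
  refine ⟨_, hM, max (-M) 0, ?_⟩
  rintro _ ⟨y, hy, rfl⟩
  have : M < f y := hy
  exact max_le_max (by linarith) le_rfl

/-! ### Occupation times -/

/-- The time spent in `P` up to time `t`; `posTime` and `zeroTime` are instances. -/
noncomputable def occTime (P : ℝ → Prop) (t : ℝ) : ℝ :=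
  (volume {s ∈ Icc (0:ℝ) t | P s}).toReal

section occTime
variable (P : ℝ → Prop)

lemma volume_occ_ne_top (t : ℝ) : volume {s ∈ Icc (0:ℝ) t | P s} ≠ ⊤ :=
  ((measure_mono (sep_subset _ _)).trans_lt measure_Icc_lt_top).ne

lemma occTime_mono : Monotone (occTime P) := fun _ t hst =>
  ENNReal.toReal_mono (volume_occ_ne_top P t)
    (measure_mono fun _ hx => ⟨⟨hx.1.1, hx.1.2.trans hst⟩, hx.2⟩)

lemma occTime_nonneg (t : ℝ) : 0 ≤ occTime P t := ENNReal.toReal_nonneg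

lemma occTime_zero : occTime P 0 = 0 := by
  have : volume {s ∈ Icc (0:ℝ) 0 | P s} = 0 :=
    measure_mono_null (t := {0}) (fun x hx => le_antisymm hx.1.2 hx.1.1) (by simp)
  rw [occTime, this, ENNReal.toReal_zero]

lemma occTime_le_add {s t : ℝ} (hst : s ≤ t) : occTime P t ≤ occTime P s + (t - s) := by
  have h1 : volume {x ∈ Icc (0:ℝ) t | P x} ≤
      volume {x ∈ Icc (0:ℝ) s | P x} + ENNReal.ofReal (t - s) := by
    rw [← Real.volume_Ioc]
    refine (measure_mono ?_).trans (measure_union_le _ _)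
    intro x hx
    rcases le_or_gt x s with h | h
    · exact Or.inl ⟨⟨hx.1.1, h⟩, hx.2⟩
    · exact Or.inr ⟨h, hx.1.2⟩
  have h2 := ENNReal.toReal_mono
    (ENNReal.add_ne_top.2 ⟨volume_occ_ne_top P s, ENNReal.ofReal_ne_top⟩) h1
  rwa [ENNReal.toReal_add (volume_occ_ne_top P s) ENNReal.ofReal_ne_top,
    ENNReal.toReal_ofReal (by linarith)] at h2

lemma occTime_continuous : Continuous (occTime P) := by
  have : LipschitzWith 1 (occTime P) := LipschitzWith.of_le_add fun x y => by
    rcases le_total x y with h | h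
    · exact (occTime_mono P h).trans (le_add_of_nonneg_right dist_nonneg)
    · rw [Real.dist_eq, abs_of_nonneg (sub_nonneg.2 h)]
      exact occTime_le_add P h
  exact this.continuous

variable {P} in
lemma occTime_const {s t : ℝ} (hst : s ≤ t) (h : ∀ x, s < x → x ≤ t → ¬ P x) :
    occTime P t = occTime P s := by
  have : {x ∈ Icc (0:ℝ) t | P x} = {x ∈ Icc (0:ℝ) s | P x} := by
    ext x
    refine ⟨fun hx => ⟨⟨hx.1.1, ?_⟩, hx.2⟩, fun hx => ⟨⟨hx.1.1, hx.1.2.trans hst⟩, hx.2⟩⟩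
    by_contra! hc
    exact h x hc hx.1.2 hx.2
  rw [occTime, occTime, this]

end occTime

lemma measurableSet_occ {h : ℝ → ℝ} (hm : Measurable ((Ici (0:ℝ)).domRestrict h)) (t : ℝ)
    {A : Set ℝ} (hA : MeasurableSet A) : MeasurableSet {s ∈ Icc (0:ℝ) t | h s ∈ A} := by
  have h1 : {s ∈ Icc (0:ℝ) t | h s ∈ A} =
      (Subtype.val '' ((Ici (0:ℝ)).domRestrict h ⁻¹' A)) ∩ Iic t := by
    ext x
    simp only [mem_ofPred_eq, mem_Icc, mem_inter_iff, mem_image, mem_preimage,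
      Subtype.exists, mem_Ici, mem_Iic]
    constructor
    · rintro ⟨⟨h0, h1⟩, h2⟩
      exact ⟨⟨x, h0, h2, rfl⟩, h1⟩
    · rintro ⟨⟨y, h0, h2, rfl⟩, h1⟩
      exact ⟨⟨h0, h1⟩, h2⟩
  rw [h1]
  exact (measurableSet_Ici.subtype_image (hm hA)).inter measurableSet_Iic

/-- A nonnegative process splits time into its positive and zero parts. -/
lemma posTime_add_zeroTime {h : ℝ → ℝ} (hm : Measurable ((Ici (0:ℝ)).domRestrict h))
    (h0 : ∀ t, 0 ≤ t → 0 ≤ h t) {t : ℝ} (ht : 0 ≤ t) : posTime h t + zeroTime h t = t := by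
  have hU : {s ∈ Icc (0:ℝ) t | 0 < h s} ∪ {s ∈ Icc (0:ℝ) t | h s = 0} = Icc 0 t := by
    ext x
    constructor
    · rintro (hx | hx) <;> exact hx.1
    · intro hx
      rcases (h0 x hx.1).lt_or_eq with h | h
      · exact Or.inl ⟨hx, h⟩
      · exact Or.inr ⟨hx, h.symm⟩
  have hD : Disjoint {s ∈ Icc (0:ℝ) t | 0 < h s} {s ∈ Icc (0:ℝ) t | h s = 0} := by
    rw [Set.disjoint_left]
    intro x hx hx'
    have h1 : 0 < h x := hx.2
    have h2 : h x = 0 := hx'.2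
    linarith
  have := measure_union (μ := volume) hD (measurableSet_occ hm t (measurableSet_singleton 0))
  rw [hU, Real.volume_Icc, sub_zero] at this
  rw [posTime, zeroTime, ← ENNReal.toReal_add (volume_occ_ne_top _ t) (volume_occ_ne_top _ t),
    ← this, ENNReal.toReal_ofReal ht]

/-- A `1`-Lipschitz function starting at `0` can only climb to `g t` during the times in `P`, if
it maps the complementary times to a null set. -/
lemma le_occTime_of_null_image {g : ℝ → ℝ} {t : ℝ} (ht : 0 ≤ t) (hg0 : g 0 = 0)
    (hg : LipschitzOnWith 1 g (Icc 0 t)) (P Q : ℝ → Prop) (hPQ : ∀ s ∈ Icc 0 t, P s ∨ Q s)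
    (hnull : volume (g '' {s ∈ Icc (0:ℝ) t | Q s}) = 0) : g t ≤ occTime P t := by
  have h1 : Icc 0 (g t) ⊆ g '' {s ∈ Icc (0:ℝ) t | P s} ∪ g '' {s ∈ Icc (0:ℝ) t | Q s} := by
    rw [← image_union]
    intro y hy
    obtain ⟨s, hs, rfl⟩ := intermediate_value_Icc ht hg.continuousOn (by rwa [hg0])
    refine ⟨s, ?_, rfl⟩
    rcases hPQ s hs with h | h
    · exact Or.inl ⟨hs, h⟩
    · exact Or.inr ⟨hs, h⟩
  have h2 : volume (g '' {s ∈ Icc (0:ℝ) t | P s}) ≤ volume {s ∈ Icc (0:ℝ) t | P s} := by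
    have := (hg.mono (sep_subset (Icc 0 t) P)).hausdorffMeasure_image_le (d := 1) zero_le_one
    simpa [hausdorffMeasure_real] using this
  have h3 : ENNReal.ofReal (g t) ≤ volume {s ∈ Icc (0:ℝ) t | P s} := by
    have := (measure_mono (μ := volume) h1).trans (measure_union_le _ _)
    rw [hnull, add_zero, Real.volume_Icc, sub_zero] at this
    exact this.trans h2
  exact (ENNReal.ofReal_le_iff_le_toReal (volume_occ_ne_top P t)).1 h3

/-! ### The running supremum and the time change -/

section Reflection
variable {f l r c : ℝ → ℝ} {γ : ℝ}

lemma neg_le_runSup (hf : CadlagOn f)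
    (hl : ∀ t : ℝ, 0 ≤ t → l t = sSup ((fun s => max (-f s) 0) '' Icc (0:ℝ) t))
    {s t : ℝ} (hs : 0 ≤ s) (hst : s ≤ t) : max (-f s) 0 ≤ l t := by
  rw [hl t (hs.trans hst)]
  exact le_csSup (hf.bddAbove t) ⟨s, ⟨hs, hst⟩, rfl⟩

lemma runSup_le (hl : ∀ t : ℝ, 0 ≤ t → l t = sSup ((fun s => max (-f s) 0) '' Icc (0:ℝ) t))
    {t M : ℝ} (ht : 0 ≤ t) (hM : ∀ s, 0 ≤ s → s ≤ t → max (-f s) 0 ≤ M) : l t ≤ M := by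
  rw [hl t ht]
  refine csSup_le ((nonempty_Icc.2 ht).image _) ?_
  rintro _ ⟨s, hs, rfl⟩
  exact hM s hs.1 hs.2

lemma runSup_mono (hf : CadlagOn f)
    (hl : ∀ t : ℝ, 0 ≤ t → l t = sSup ((fun s => max (-f s) 0) '' Icc (0:ℝ) t))
    {s t : ℝ} (hs : 0 ≤ s) (hst : s ≤ t) : l s ≤ l t :=
  runSup_le hl hs fun _ hu hus => neg_le_runSup hf hl hu (hus.trans hst)

/-- While the reflection is off `0`, its regulator `l` is constant on a short interval to the
right; picking a rational point there shows that `l` takes only countably many values. -/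
lemma countable_runSup_image (hf : CadlagOn f)
    (hl : ∀ t : ℝ, 0 ≤ t → l t = sSup ((fun s => max (-f s) 0) '' Icc (0:ℝ) t)) :
    (l '' {u | 0 ≤ u ∧ 0 < f u + l u}).Countable := by
  refine (countable_range (fun q : ℚ => l q)).mono ?_
  rintro _ ⟨u, ⟨hu, hpos⟩, rfl⟩
  have h1 : ∀ᶠ y in 𝓝[≥] u, -l u < f y :=
    (hf.1 u hu).tendsto.eventually (lt_mem_nhds (by linarith))
  obtain ⟨v, huv, hv⟩ := (mem_nhdsGE_iff_exists_Ico_subset).1 h1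
  obtain ⟨q, hq1, hq2⟩ := exists_rat_btwn (mem_Ioi.1 huv)
  refine ⟨q, le_antisymm (runSup_le hl (hu.trans hq1.le) fun s hs hsq => ?_)
    (runSup_mono hf hl hu hq1.le)⟩
  rcases le_total s u with h | h
  · exact neg_le_runSup hf hl hs h
  · have h2 : -l u < f s := hv ⟨h, hsq.trans_lt hq2⟩
    exact max_le (by linarith) ((le_max_right _ _).trans (neg_le_runSup hf hl hu le_rfl))

lemma timeChange_mono (hγ : 0 < γ) (hf : CadlagOn f)
    (hl : ∀ t : ℝ, 0 ≤ t → l t = sSup ((fun s => max (-f s) 0) '' Icc (0:ℝ) t))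
    (hc : ∀ t : ℝ, 0 ≤ t → 0 ≤ c t ∧ c t + l (c t) / γ = t)
    {s t : ℝ} (hs : 0 ≤ s) (hst : s ≤ t) : c s ≤ c t := by
  by_contra! h
  have ht := hc t (hs.trans hst)
  have h1 : l (c t) / γ ≤ l (c s) / γ :=
    div_le_div_of_nonneg_right (runSup_mono hf hl ht.1 h.le) hγ.le
  linarith [(hc s hs).2, ht.2]

/-- Uniqueness of the inverse of `a(t) = t + l(t)/γ`. -/
lemma timeChange_unique (hγ : 0 < γ) (hf : CadlagOn f)
    (hl : ∀ t : ℝ, 0 ≤ t → l t = sSup ((fun s => max (-f s) 0) '' Icc (0:ℝ) t))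
    {x y : ℝ} (hx : 0 ≤ x) (hy : 0 ≤ y) (h : x + l x / γ = y + l y / γ) : x = y := by
  rcases lt_trichotomy x y with hxy | hxy | hxy
  · have h1 := div_le_div_of_nonneg_right (runSup_mono hf hl hx hxy.le) hγ.le
    linarith
  · exact hxy
  · have h1 := div_le_div_of_nonneg_right (runSup_mono hf hl hy hxy.le) hγ.le
    linarith

end Reflection

lemma lipschitzOnWith_one_of_mono {g : ℝ → ℝ} {t : ℝ}
    (hm : ∀ x y, 0 ≤ x → x ≤ y → g x ≤ g y) (ha : ∀ x y, 0 ≤ x → x ≤ y → g y ≤ g x + (y - x)) :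
    LipschitzOnWith 1 g (Icc 0 t) :=
  LipschitzOnWith.of_le_add fun x hx y hy => by
    rcases le_total x y with h | h
    · exact (hm x y hx.1 h).trans (le_add_of_nonneg_right dist_nonneg)
    · rw [Real.dist_eq, abs_of_nonneg (sub_nonneg.2 h)]
      exact ha y x hy.1 h

/-! ### Existence -/

lemma sticky_exists {f l r c : ℝ → ℝ} {γ : ℝ} (hγ : 0 < γ) (hf : CadlagOn f)
    (hl : ∀ t : ℝ, 0 ≤ t → l t = sSup ((fun s => max (-f s) 0) '' Icc (0:ℝ) t))
    (hr : ∀ t : ℝ, r t = f t + l t)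
    (hnull : volume {t : ℝ | 0 ≤ t ∧ r t = 0} = 0)
    (hc : ∀ t : ℝ, 0 ≤ t → 0 ≤ c t ∧ c t + l (c t) / γ = t) :
    StickySol f γ (fun t => r (c t)) := by
  have cmono : ∀ x y, 0 ≤ x → x ≤ y → c x ≤ c y := fun x y => timeChange_mono hγ hf hl hc
  have l0 : ∀ x, 0 ≤ x → 0 ≤ l x := fun x hx =>
    (le_max_right _ _).trans (neg_le_runSup hf hl hx le_rfl)
  have Lmono : ∀ x y, 0 ≤ x → x ≤ y → l (c x) / γ ≤ l (c y) / γ := fun x y hx hxy =>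
    div_le_div_of_nonneg_right (runSup_mono hf hl (hc x hx).1 (cmono x y hx hxy)) hγ.le
  have clip : ∀ x y, 0 ≤ x → x ≤ y → c y ≤ c x + (y - x) := fun x y hx hxy => by
    linarith [Lmono x y hx hxy, (hc x hx).2, (hc y (hx.trans hxy)).2]
  have Llip : ∀ x y, 0 ≤ x → x ≤ y → l (c y) / γ ≤ l (c x) / γ + (y - x) := fun x y hx hxy => by
    linarith [cmono x y hx hxy, (hc x hx).2, (hc y (hx.trans hxy)).2]
  have c0 : c 0 = 0 := by
    have h1 := hc 0 le_rfl
    have h2 := div_nonneg (l0 _ h1.1) hγ.le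
    linarith [h1.1, h1.2]
  have L0 : l (c 0) / γ = 0 := by linarith [(hc 0 le_rfl).2]
  have r0 : ∀ x, 0 ≤ x → 0 ≤ r x := fun x hx => by
    have := (le_max_left _ _).trans (neg_le_runSup hf hl hx le_rfl)
    rw [hr]; linarith
  have hm : Measurable ((Ici (0:ℝ)).domRestrict (fun t => r (c t))) := by
    have hF : Measurable (fun x => f (max x 0)) := by
      refine measurable_of_continuousWithinAt_Ici fun x => ?_
      refine ContinuousWithinAt.comp (t := Ici (max x 0)) (hf.1 _ (le_max_right _ _)) ?_ ?_
      · exact (continuous_id.max continuous_const).continuousWithinAt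
      · exact fun y hy => mem_Ici.2 (max_le_max (mem_Ici.1 hy) le_rfl)
    have hcm : Measurable (fun x : Ici (0:ℝ) => c x) :=
      Monotone.measurable fun x y hxy => cmono x y x.2 hxy
    have h1 : (Ici (0:ℝ)).domRestrict (fun t => r (c t)) =
        fun x : Ici (0:ℝ) => f (max (c x) 0) + γ * ((x:ℝ) - c x) := by
      funext x
      have h2 := hc x x.2
      have h3 : (x:ℝ) - c x = l (c x) / γ := by linarith [h2.2]
      rw [domRestrict_apply, hr, max_eq_left h2.1, h3, mul_div_cancel₀ _ hγ.ne']
    rw [h1]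
    exact (hF.comp hcm).add (measurable_const.mul (measurable_subtype_coe.sub hcm))
  refine ⟨hm, fun t ht => ?_⟩
  have hsum := posTime_add_zeroTime hm (fun s hs => r0 _ (hc s hs).1) ht
  have split : ∀ s ∈ Icc 0 t, 0 < r (c s) ∨ r (c s) = 0 := fun s hs =>
    (r0 _ (hc s hs.1).1).lt_or_eq.imp id Eq.symm
  have hp : c t ≤ posTime (fun t => r (c t)) t := by
    refine le_occTime_of_null_image ht c0 (lipschitzOnWith_one_of_mono cmono clip)
      (fun s => 0 < r (c s)) (fun s => r (c s) = 0) split (measure_mono_null ?_ hnull)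
    rintro _ ⟨s, hs, rfl⟩
    exact ⟨(hc s hs.1.1).1, hs.2⟩
  have hz : l (c t) / γ ≤ zeroTime (fun t => r (c t)) t := by
    refine le_occTime_of_null_image (g := fun s => l (c s) / γ) ht L0
      (lipschitzOnWith_one_of_mono Lmono Llip)
      (fun s => r (c s) = 0) (fun s => 0 < r (c s)) (fun s hs => (split s hs).symm) ?_
    refine Countable.measure_zero (((countable_runSup_image hf hl).image (· / γ)).mono ?_) _
    rintro _ ⟨s, hs, rfl⟩
    refine ⟨l (c s), ⟨c s, ⟨(hc s hs.1.1).1, ?_⟩, rfl⟩, rfl⟩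
    rw [← hr]; exact hs.2
  -- Both inequalities are sharp because the two sides have the same sum `t`.
  have hp' : posTime (fun t => r (c t)) t = c t := by linarith [(hc t ht).2]
  have hz' : zeroTime (fun t => r (c t)) t = l (c t) / γ := by linarith [(hc t ht).2]
  rw [hp', hz', mul_div_cancel₀ _ hγ.ne']
  exact hr _

/-! ### Uniqueness -/

lemma posTime_eq (h : ℝ → ℝ) : posTime h = occTime (fun s => 0 < h s) := rfl

lemma zeroTime_eq (h : ℝ → ℝ) : zeroTime h = occTime (fun s => h s = 0) := rfl

/-- A solution cannot jump from `[0,∞)` to a negative value: `f` has no negative jumps and the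
two clocks `posTime`, `zeroTime` are continuous and nondecreasing. -/
lemma StickySol.nonneg_of_frequently {f h : ℝ → ℝ} {γ : ℝ} (hγ : 0 < γ) (hf : CadlagOn f)
    (hjump : NonnegJumps f) (hh : StickySol f γ h) {σ : ℝ} (hσ : 0 < σ)
    (hfr : ∃ᶠ s in 𝓝[<] σ, 0 ≤ h s) : 0 ≤ h σ := by
  have pmono : Monotone (posTime h) := posTime_eq h ▸ occTime_mono _
  have zmono : Monotone (zeroTime h) := zeroTime_eq h ▸ occTime_mono _
  have pcont : Continuous (posTime h) := posTime_eq h ▸ occTime_continuous _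
  have zcont : Continuous (zeroTime h) := zeroTime_eq h ▸ occTime_continuous _
  have ev0 : ∀ᶠ s in 𝓝[<] σ, 0 < s := Filter.Eventually.filter_mono nhdsWithin_le_nhds
    (lt_mem_nhds hσ)
  have evσ : ∀ᶠ s in 𝓝[<] σ, s < σ := self_mem_nhdsWithin
  by_cases hcase : ∃ s₀ < σ, posTime h s₀ = posTime h σ
  · obtain ⟨s₀, hs₀, heq⟩ := hcase
    have ev1 : ∀ᶠ s in 𝓝[<] σ, s₀ < s := Filter.Eventually.filter_mono nhdsWithin_le_nhds
      (lt_mem_nhds hs₀)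
    obtain ⟨s, hs, hs0, hsσ, hs1⟩ := (hfr.and_eventually (ev0.and (evσ.and ev1))).exists
    have hp : posTime h s = posTime h σ :=
      le_antisymm (pmono hsσ.le) (heq ▸ pmono hs1.le)
    have h1 := hh.2 s hs0.le
    have h2 := hh.2 σ hσ.le
    rw [hp] at h1
    have h3 := mul_le_mul_of_nonneg_left (zmono hsσ.le) hγ.le
    linarith
  · push Not at hcase
    have plt : ∀ s < σ, posTime h s < posTime h σ := fun s hs =>
      lt_of_le_of_ne (pmono hs.le) (hcase s hs)
    have ppos : 0 < posTime h σ := lt_of_le_of_lt ENNReal.toReal_nonneg (plt 0 hσ)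
    obtain ⟨L, hL⟩ := hf.2 _ ppos
    have hLle : L ≤ f (posTime h σ) := by
      have := hjump _ ppos
      rwa [leftLim_eq_of_tendsto hL] at this
    have hpt : Tendsto (posTime h) (𝓝[<] σ) (𝓝[<] (posTime h σ)) :=
      tendsto_nhdsWithin_iff.2 ⟨pcont.continuousAt.tendsto.mono_left nhdsWithin_le_nhds,
        evσ.mono fun s hs => plt s hs⟩
    have hzt : Tendsto (zeroTime h) (𝓝[<] σ) (𝓝 (zeroTime h σ)) :=
      zcont.continuousAt.tendsto.mono_left nhdsWithin_le_nhds
    have hlim : Tendsto h (𝓝[<] σ) (𝓝 (L + γ * zeroTime h σ)) := by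
      refine ((hL.comp hpt).add (hzt.const_mul γ)).congr' ?_
      filter_upwards [ev0] with s hs
      exact (hh.2 s hs.le).symm
    have h1 : 0 ≤ L + γ * zeroTime h σ := isClosed_Ici.mem_of_frequently_of_tendsto hfr hlim
    have h2 := hh.2 σ hσ.le
    linarith

/-- The supremum `σ` of the (nonempty) set of times in `[0,t]` satisfying `P`; it is
approached from the left by such times when it is not attained. -/
lemma exists_last {P : ℝ → Prop} {s₀ t : ℝ} (h0 : 0 ≤ s₀) (hs : s₀ ≤ t) (hP : P s₀) :
    ∃ σ, 0 ≤ σ ∧ σ ≤ t ∧ (∀ x, σ < x → x ≤ t → ¬ P x) ∧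
      (P σ ∨ (0 < σ ∧ ∃ᶠ s in 𝓝[<] σ, P s ∧ 0 ≤ s)) := by
  set S := {s ∈ Icc 0 t | P s}
  have hb : BddAbove S := ⟨t, fun x hx => hx.1.2⟩
  have hmem : s₀ ∈ S := ⟨⟨h0, hs⟩, hP⟩
  have h0σ : s₀ ≤ sSup S := le_csSup hb hmem
  refine ⟨sSup S, h0.trans h0σ, csSup_le ⟨_, hmem⟩ fun x hx => hx.1.2, ?_, ?_⟩
  · intro x hx hxt hPx
    exact absurd (le_csSup hb (⟨⟨(h0.trans h0σ).trans hx.le, hxt⟩, hPx⟩ : x ∈ S)) (not_le.2 hx)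
  · by_cases hσ : P (sSup S)
    · exact Or.inl hσ
    · have ne : ∀ x ∈ S, x < sSup S := fun x hx =>
        lt_of_le_of_ne (le_csSup hb hx) fun h => hσ (h ▸ hx.2)
      refine Or.inr ⟨h0.trans_lt (ne _ hmem), ?_⟩
      refine frequently_iff.2 fun {U} hU => ?_
      obtain ⟨a, ha, haU⟩ := (mem_nhdsLT_iff_exists_Ioo_subset' (ne _ hmem)).1 hU
      obtain ⟨x, hx, hax⟩ := exists_lt_of_lt_csSup ⟨_, hmem⟩ ha
      exact ⟨x, haU ⟨hax, ne x hx⟩, hx.2, hx.1.1⟩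

lemma StickySol.nonneg {f h : ℝ → ℝ} {γ : ℝ} (hγ : 0 < γ) (hf : CadlagOn f)
    (hjump : NonnegJumps f) (hf0 : 0 ≤ f 0) (hh : StickySol f γ h) (t : ℝ) (ht : 0 ≤ t) :
    0 ≤ h t := by
  have hh0 : 0 ≤ h 0 := by
    rw [hh.2 0 le_rfl, posTime_eq, zeroTime_eq, occTime_zero, occTime_zero]
    simpa using hf0
  obtain ⟨σ, hσ0, hσt, hlast, hσ⟩ := exists_last (P := fun s => 0 ≤ h s) le_rfl ht hh0
  have hσ' : 0 ≤ h σ := by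
    rcases hσ with hσ | ⟨hpos, hfr⟩
    · exact hσ
    · exact hh.nonneg_of_frequently hγ hf hjump hpos (hfr.mono fun s hs => hs.1)
  -- Both clocks are stopped while `h < 0`, so `h` keeps its value `h σ ≥ 0`.
  have hp : posTime h t = posTime h σ := by
    rw [posTime_eq]
    exact occTime_const hσt fun x h1 h2 h3 => hlast x h1 h2 h3.le
  have hz : zeroTime h t = zeroTime h σ := by
    rw [zeroTime_eq]
    exact occTime_const hσt fun x h1 h2 h3 => hlast x h1 h2 h3.ge
  rw [hh.2 t ht, hp, hz, ← hh.2 σ hσ0]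
  exact hσ'

/-- Skorohod's argument: `γ·zeroTime` is the regulator of the reflection run on the clock
`posTime`. -/
lemma StickySol.mul_zeroTime {f l h : ℝ → ℝ} {γ : ℝ} (hγ : 0 < γ) (hf : CadlagOn f)
    (hl : ∀ t : ℝ, 0 ≤ t → l t = sSup ((fun s => max (-f s) 0) '' Icc (0:ℝ) t))
    (hh : StickySol f γ h) (hnn : ∀ t, 0 ≤ t → 0 ≤ h t) {t : ℝ} (ht : 0 ≤ t) :
    γ * zeroTime h t = l (posTime h t) := by
  have pmono : Monotone (posTime h) := posTime_eq h ▸ occTime_mono _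
  have zmono : Monotone (zeroTime h) := zeroTime_eq h ▸ occTime_mono _
  have pcont : Continuous (posTime h) := posTime_eq h ▸ occTime_continuous _
  have zcont : Continuous (zeroTime h) := zeroTime_eq h ▸ occTime_continuous _
  have p0 : ∀ s, 0 ≤ posTime h s := fun s => ENNReal.toReal_nonneg
  have z0 : ∀ s, 0 ≤ zeroTime h s := fun s => ENNReal.toReal_nonneg
  have pz : posTime h 0 = 0 := by rw [posTime_eq, occTime_zero]
  refine le_antisymm ?_ (runSup_le hl (p0 t) fun u hu hut => ?_)
  · by_cases hne : ∃ s₀, 0 ≤ s₀ ∧ s₀ ≤ t ∧ h s₀ = 0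
    · obtain ⟨s₀, h1, h2, h3⟩ := hne
      obtain ⟨σ, hσ0, hσt, hlast, hσ⟩ := exists_last (P := fun s => h s = 0) h1 h2 h3
      have hz : zeroTime h t = zeroTime h σ := by
        rw [zeroTime_eq]; exact occTime_const hσt hlast
      rw [hz]
      have key : ∀ s, 0 ≤ s → s ≤ σ → h s = 0 → γ * zeroTime h s ≤ l (posTime h t) := by
        intro s hs hsσ hs0
        have h4 := hh.2 s hs
        have h5 := (le_max_left _ _).trans
          (neg_le_runSup hf hl (p0 s) (pmono (hsσ.trans hσt)))
        linarith
      rcases hσ with hσ | ⟨-, hfr⟩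
      · exact key σ hσ0 le_rfl hσ
      · have hlim : Tendsto (fun s => γ * zeroTime h s) (𝓝[<] σ) (𝓝 (γ * zeroTime h σ)) :=
          (zcont.continuousAt.tendsto.mono_left nhdsWithin_le_nhds).const_mul γ
        refine isClosed_Iic.mem_of_frequently_of_tendsto ?_ hlim
        refine (hfr.and_eventually self_mem_nhdsWithin).mono ?_
        rintro s ⟨⟨hs0, hs⟩, hsσ⟩
        exact key s hs (le_of_lt hsσ) hs0
    · push Not at hne
      have hz : zeroTime h t = 0 := by
        rw [zeroTime_eq, occTime_const ht fun x h1 h2 => hne x h1.le h2, occTime_zero]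
      rw [hz, mul_zero]
      exact (le_max_right _ _).trans (neg_le_runSup hf hl (p0 t) le_rfl)
  · obtain ⟨s, hs, rfl⟩ := intermediate_value_Icc ht pcont.continuousOn
      (show u ∈ Icc (posTime h 0) (posTime h t) from ⟨by rwa [pz], hut⟩)
    have h1 := hh.2 s hs.1
    have h2 := hnn s hs.1
    have h3 := mul_le_mul_of_nonneg_left (zmono hs.2) hγ.le
    exact max_le (by linarith) (mul_nonneg hγ.le (z0 t))

lemma sticky_unique {f l r c : ℝ → ℝ} {γ : ℝ} (hγ : 0 < γ) (hf : CadlagOn f)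
    (hjump : NonnegJumps f) (hf0 : 0 ≤ f 0)
    (hl : ∀ t : ℝ, 0 ≤ t → l t = sSup ((fun s => max (-f s) 0) '' Icc (0:ℝ) t))
    (hr : ∀ t : ℝ, r t = f t + l t)
    (hc : ∀ t : ℝ, 0 ≤ t → 0 ≤ c t ∧ c t + l (c t) / γ = t)
    {h : ℝ → ℝ} (hh : StickySol f γ h) {t : ℝ} (ht : 0 ≤ t) : h t = r (c t) := by
  have hnn := hh.nonneg hγ hf hjump hf0
  have hz := hh.mul_zeroTime hγ hf hl hnn ht
  have hsum := posTime_add_zeroTime hh.1 hnn ht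
  have hpc : posTime h t = c t := by
    refine timeChange_unique hγ hf hl ENNReal.toReal_nonneg (hc t ht).1 ?_
    rw [(hc t ht).2, ← hz, mul_div_cancel_left₀ _ hγ.ne', hsum]
  rw [hh.2 t ht, hz, hpc, hr]

/-- Existence and uniqueness for the sticky equation `Sγ(f)`: if `{t ≥ 0 : r(t) = 0}`
is Lebesgue-null, where `r = f + l` is the Skorohod reflection of `f`, then `Sγ(f)`
has exactly one solution, namely `h = r ∘ c` where `c` is the inverse on `[0,∞)` of
the strictly increasing continuous function `a(t) = t + l(t)/γ`. -/
theorem sticky_exists_unique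
    (f l r c : ℝ → ℝ) (γ : ℝ) (hγ : 0 < γ)
    (hf : CadlagOn f) (hjump : NonnegJumps f) (hf0 : 0 ≤ f 0)
    (hl : ∀ t : ℝ, 0 ≤ t → l t = sSup ((fun s => max (-f s) 0) '' Icc (0:ℝ) t))
    (hr : ∀ t : ℝ, r t = f t + l t)
    (hnull : volume {t : ℝ | 0 ≤ t ∧ r t = 0} = 0)
    (hc : ∀ t : ℝ, 0 ≤ t → 0 ≤ c t ∧ c t + l (c t) / γ = t) :
    StickySol f γ (fun t => r (c t)) ∧
    ∀ h' : ℝ → ℝ, StickySol f γ h' → ∀ t : ℝ, 0 ≤ t → h' t = r (c t) := by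
  exact ⟨sticky_exists hγ hf hl hr hnull hc,
    fun _ hh' _ ht => sticky_unique hγ hf hjump hf0 hl hr hc hh' ht⟩
end
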